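/- arXiv:2512.17285 — 2 statements merged into one kernel-verified Lean document; each statement's English description precedes it below -/
import Mathlib

section
/- (Nowakowski) For every infinite set S ⊆ ℕ with infinite complement, there exists a sequence x : ℕ → ℝ of positive terms with ∑ₙ x(n) < ∞ such that K(x) = S and the achievement set E(x) is a Cantorval. -/
/-!
The sequence is `x n = 2 · 2⁻ⁿ` for `n ∈ S` and `x n = 2⁻ⁿ` for `n ∉ S`, except that the index just
before a run of `S` with last element `e` carries `3 · 2⁻ᵉ`. For `S` the even numbers this is, up to
scaling, the Guthrie–Nymann series with terms `3 · 4⁻ᵏ, 2 · 4⁻ᵏ`.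

*Kakeya conditions.* Two telescoping estimates show that the `n`-th remainder lies between
`2 · 2⁻ⁿ - 2⁻ᵉ` and `2 · 2⁻ⁿ - 2⁻ᵉ / 3`, where `e` is the end of the run of `S` starting at `n + 1`
(`e = n` if the run is empty). This decides every Kakeya condition (`kakeyaSet_kseq`).

*Intervals.* Let `m + 1 ∉ S`. By induction over the runs of `S`, the sums of terms with indices in
`(m, n]` contain, for `n + 1 ∉ S`, all multiples of `2⁻ⁿ` in `[2/3 · (2⁻ᵐ - 2⁻ⁿ), 2⁻ᵐ)`: within a
block ending at `e`, the doubled powers give the even multiples of `2⁻ᵉ` and the term `3 · 2⁻ᵉ`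
gives the odd ones, at the cost of raising the left end by `2 · 2⁻ᵉ` (`Filled.step`). Hence the
`m`-th tail has all of `[2/3 · 2⁻ᵐ, 2⁻ᵐ]` in the closure of its subsums (`tail_dense`).

*Cantorval.* The upper endpoint `p` of a gap is a finite subsum, since removing an index with a
small term would land inside the gap; and just to the right of `p` the achievement set is a
translate by `p` of a tail's achievement set. The tails contain small intervals, and they omit the
points between the `k`-th remainder and `x k` whenever `k` is the end of a run of `S`, because `x k`
is then minimal among the terms up to `k`. Lower endpoints follow by the symmetry
`y ↦ ∑ x n - y` (`isCantorval_of_rightMixed`, `isCantorval_range_subsum`).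
-/

open Set Filter Topology MeasureTheory
open scoped Pointwise

/-- The achievement set (set of subsums) of the series `∑_{n ≥ 1} x n`
(sequences are indexed by `n ≥ 1`; the value `x 0` is irrelevant). -/
def achievementSet (x : ℕ → ℝ) : Set ℝ :=
  {y : ℝ | ∃ A : Set ℕ, A ⊆ {n | 1 ≤ n} ∧ HasSum (fun n : A => x (n : ℕ)) y}

/-- The `n`-th remainder `r n = ∑_{i > n} x i` of a series. -/
noncomputable def remainder (x : ℕ → ℝ) (n : ℕ) : ℝ :=
  ∑' i : {i : ℕ // n < i}, x (i : ℕ)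

/-- The set of Kakeya conditions `K(x) = {n ≥ 1 : x n > r n}`. -/
def kakeyaSet (x : ℕ → ℝ) : Set ℕ :=
  {n : ℕ | 1 ≤ n ∧ remainder x n < x n}

/-- A Cantor set: a set homeomorphic to the Cantor ternary set. -/
def IsCantorSet (A : Set ℝ) : Prop :=
  Nonempty (A ≃ₜ cantorSet)

/-- A multi-interval set: the union of finitely many (at least one)
nondegenerate compact intervals. -/
def IsMultiInterval (A : Set ℝ) : Prop :=
  ∃ S : Finset (ℝ × ℝ), S.Nonempty ∧ (∀ p ∈ S, p.1 < p.2) ∧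
    A = ⋃ p ∈ S, Set.Icc p.1 p.2

/-- The gaps of a set `A ⊆ ℝ`: the bounded connected components of its complement. -/
def gaps (A : Set ℝ) : Set (Set ℝ) :=
  {G | (∃ x ∉ A, G = connectedComponentIn Aᶜ x) ∧ Bornology.IsBounded G}

/-- The nondegenerate connected components of a set `A ⊆ ℝ`. -/
def intervalComponents (A : Set ℝ) : Set (Set ℝ) :=
  {I | (∃ x ∈ A, I = connectedComponentIn A x) ∧ ¬ I.Subsingleton}

/-- A Cantorval: a nonempty compact subset of `ℝ` possessing at least one gap and at
least one nondegenerate component, such that both endpoints of every gap are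
accumulation points both of other gaps and of nondegenerate components. -/
def IsCantorval (A : Set ℝ) : Prop :=
  A.Nonempty ∧ IsCompact A ∧ (gaps A).Nonempty ∧ (intervalComponents A).Nonempty ∧
    ∀ G ∈ gaps A, ∀ p ∈ ({sInf G, sSup G} : Set ℝ),
      (∀ ε > (0 : ℝ), ∃ G' ∈ gaps A, G' ≠ G ∧ (G' ∩ Metric.ball p ε).Nonempty) ∧
      (∀ ε > (0 : ℝ), ∃ I ∈ intervalComponents A, (I ∩ (Metric.ball p ε \ {p})).Nonempty)

/-! ### Subsums -/

/-- The sum of the terms of `x` with index in `A`, written with an indicator so that subsums over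
different index sets are sums over the same type. -/
noncomputable def subsum (x : ℕ → ℝ) (A : Set ℕ) : ℝ := ∑' n, A.indicator x n

lemma achievementSet_eq_range {x : ℕ → ℝ} (x0 : x 0 = 0) (hs : Summable x) :
    achievementSet x = range (subsum x) := by
  ext y
  constructor
  · rintro ⟨A, -, hA⟩
    exact ⟨A, ((hasSum_subtype_iff_indicator (s := A)).1 hA).tsum_eq⟩
  · rintro ⟨A, rfl⟩
    refine ⟨A \ {0}, fun n hn => Nat.one_le_iff_ne_zero.2 hn.2, ?_⟩
    have h : (A \ {0}).indicator x = A.indicator x := by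
      classical
      funext n
      by_cases hn : n = 0
      · subst hn
        rw [Set.indicator_apply, Set.indicator_apply, x0]
        simp
      · rw [Set.indicator_apply, Set.indicator_apply]
        simp [hn]
    refine (hasSum_subtype_iff_indicator (s := A \ {0})).2 ?_
    rw [h]
    exact (hs.indicator A).hasSum

lemma remainder_eq (x : ℕ → ℝ) (n : ℕ) : remainder x n = subsum x (Ioi n) :=
  tsum_subtype (Ioi n) x

lemma subsum_union {x : ℕ → ℝ} (hs : Summable x) {A B : Set ℕ} (h : Disjoint A B) :
    subsum x (A ∪ B) = subsum x A + subsum x B := by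
  unfold subsum
  rw [Set.indicator_union_of_disjoint h]
  exact (hs.indicator A).tsum_add (hs.indicator B)

lemma subsum_singleton (x : ℕ → ℝ) (k : ℕ) : subsum x {k} = x k := by
  unfold subsum
  rw [tsum_eq_single k]
  · simp
  · intro b hb; simp [hb]

lemma subsum_empty (x : ℕ → ℝ) : subsum x ∅ = 0 := by simp [subsum]

lemma subsum_finset (x : ℕ → ℝ) (B : Finset ℕ) : subsum x B = ∑ n ∈ B, x n := by
  unfold subsum
  rw [tsum_eq_sum (s := B)]
  · exact Finset.sum_congr rfl fun n hn => by simp [hn]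
  · intro n hn; simp [hn]

lemma subsum_mono {x : ℕ → ℝ} (hs : Summable x) (hx : ∀ n, 0 ≤ x n) {A B : Set ℕ} (h : A ⊆ B) :
    subsum x A ≤ subsum x B :=
  (hs.indicator A).tsum_le_tsum (fun n => Set.indicator_le_indicator_of_subset h hx n)
    (hs.indicator B)

lemma subsum_nonneg {x : ℕ → ℝ} (hx : ∀ n, 0 ≤ x n) (A : Set ℕ) : 0 ≤ subsum x A :=
  tsum_nonneg fun n => Set.indicator_nonneg (fun n _ => hx n) n

lemma subsum_compl {x : ℕ → ℝ} (hs : Summable x) (A : Set ℕ) :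
    subsum x Aᶜ = subsum x univ - subsum x A := by
  rw [← Set.union_compl_self A, subsum_union hs disjoint_compl_right]; ring

lemma le_subsum {x : ℕ → ℝ} (hs : Summable x) (hx : ∀ n, 0 ≤ x n) {A : Set ℕ} {k : ℕ}
    (h : k ∈ A) : x k ≤ subsum x A := by
  rw [← subsum_singleton x k]
  exact subsum_mono hs hx (by simpa using h)

lemma subsum_Ioi_succ {x : ℕ → ℝ} (hs : Summable x) (n : ℕ) :
    subsum x (Ioi n) = x (n + 1) + subsum x (Ioi (n + 1)) := by
  rw [← subsum_singleton x (n + 1), ← subsum_union hs (by simp)]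
  congr 1
  ext k
  simp only [mem_Ioi, singleton_union, mem_insert_iff]
  omega

lemma tendsto_subsum_Ioi {x : ℕ → ℝ} (hs : Summable x) :
    Tendsto (fun n => subsum x (Ioi n)) atTop (𝓝 0) := by
  have h : ∀ n, subsum x (Ioi n) = subsum x univ - ∑ i ∈ Finset.range (n + 1), x i := by
    intro n
    rw [← subsum_finset, ← subsum_compl hs]
    congr 1
    ext k
    simp
  simp_rw [h]
  have h1 : Tendsto (fun n => ∑ i ∈ Finset.range n, x i) atTop (𝓝 (subsum x univ)) := by
    simpa [subsum] using hs.hasSum.tendsto_sum_nat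
  simpa using (tendsto_const_nhds (x := subsum x univ)).sub (h1.comp (tendsto_add_atTop_nat 1))

lemma isCompact_range_subsum {x : ℕ → ℝ} (hs : Summable x) (hx : ∀ n, 0 ≤ x n) :
    IsCompact (range (subsum x)) := by
  have h : range (subsum x) = range fun b : ℕ → Bool => ∑' n, if b n then x n else 0 := by
    classical
    ext y
    constructor
    · rintro ⟨A, rfl⟩
      exact ⟨fun n => decide (n ∈ A), by simp [subsum, Set.indicator_apply]⟩
    · rintro ⟨b, rfl⟩
      exact ⟨{n | b n}, by simp [subsum, Set.indicator_apply]⟩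
  rw [h]
  refine isCompact_range (continuous_tsum (u := x) (fun n => ?_) hs fun n b => ?_)
  · exact (continuous_of_discreteTopology (f := fun c : Bool => if c then x n else 0)).comp
      (continuous_apply n)
  · split_ifs <;> simp [abs_of_nonneg, hx n]

/-! ### A criterion for Cantorvals -/

lemma mem_connectedComponentIn_compl_bounds {E : Set ℝ} {z q : ℝ} (hz : z ∉ E)
    (hq : q ∈ connectedComponentIn Eᶜ z) {u : ℝ} (hu : u ∈ E) :
    (u < z → u < q) ∧ (z < u → q < u) := by
  have hz' : z ∈ connectedComponentIn Eᶜ z := mem_connectedComponentIn hz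
  have hord : (connectedComponentIn Eᶜ z).OrdConnected :=
    isPreconnected_connectedComponentIn.ordConnected
  have hnot : u ∉ connectedComponentIn Eᶜ z := fun h => connectedComponentIn_subset _ _ h hu
  constructor
  · intro h
    by_contra hc
    exact hnot (hord.out hq hz' ⟨not_lt.1 hc, h.le⟩)
  · intro h
    by_contra hc
    exact hnot (hord.out hz' hq ⟨h.le, not_lt.1 hc⟩)

lemma connectedComponentIn_mem_gaps {E : Set ℝ} {z u v : ℝ} (hz : z ∉ E) (hu : u ∈ E) (hv : v ∈ E)
    (huz : u < z) (hzv : z < v) : connectedComponentIn Eᶜ z ∈ gaps E := by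
  refine ⟨⟨z, hz, rfl⟩, (Metric.isBounded_Icc u v).subset fun q hq => ?_⟩
  exact ⟨((mem_connectedComponentIn_compl_bounds hz hq hu).1 huz).le,
    ((mem_connectedComponentIn_compl_bounds hz hq hv).2 hzv).le⟩

lemma exists_intervalComponent {E : Set ℝ} {u v : ℝ} (huv : u < v) (h : Icc u v ⊆ E) :
    ∃ I ∈ intervalComponents E, u ∈ I := by
  have hu : u ∈ Icc u v := left_mem_Icc.2 huv.le
  have hsub : Icc u v ⊆ connectedComponentIn E u := isPreconnected_Icc.subset_connectedComponentIn hu h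
  refine ⟨_, ⟨⟨u, h hu, rfl⟩, fun hss => ?_⟩, hsub hu⟩
  exact huv.ne (hss (hsub hu) (hsub (right_mem_Icc.2 huv.le)))

/-- To the right of `p`, arbitrarily close to it, `E` has both a gap and a nondegenerate
interval. -/
def RightMixed (E : Set ℝ) (p : ℝ) : Prop :=
  ∀ ε > 0, (∃ z ∉ E, ∃ v ∈ E, p < z ∧ z < v ∧ z < p + ε) ∧
    ∃ u v, p < u ∧ u < v ∧ v < p + ε ∧ Icc u v ⊆ E

/-- The upper endpoint of a gap of a closed set belongs to the set and is isolated in it from the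
left. -/
lemma sSup_gap {E : Set ℝ} (hE : IsClosed E) {G : Set ℝ} (hG : G ∈ gaps E) :
    sSup G ∈ E ∧ ∃ c < sSup G, ∀ y ∈ E, c < y → sSup G ≤ y := by
  obtain ⟨⟨z, hz, rfl⟩, hb⟩ := hG
  set G := connectedComponentIn Eᶜ z with hGdef
  have hzG : z ∈ G := mem_connectedComponentIn hz
  have hord : G.OrdConnected := isPreconnected_connectedComponentIn.ordConnected
  have hopen : IsOpen G := hE.isOpen_compl.connectedComponentIn
  have hlt : ∀ q ∈ G, q < sSup G := by
    intro q hq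
    obtain ⟨ε, hε, hball⟩ := Metric.isOpen_iff.1 hopen q hq
    have : q + ε / 2 ∈ G := hball (by simp [abs_of_pos, hε])
    have := le_csSup hb.bddAbove this
    linarith
  have hIco : ∀ y, z ≤ y → y < sSup G → y ∈ G := by
    intro y h1 h2
    obtain ⟨q, hq, hyq⟩ := exists_lt_of_lt_csSup ⟨z, hzG⟩ h2
    exact hord.out hzG hq ⟨h1, hyq.le⟩
  refine ⟨?_, z, hlt z hzG, fun y hy hzy => ?_⟩
  · by_contra hn
    have hsub : Icc z (sSup G) ⊆ Eᶜ := by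
      intro y hy
      rcases hy.2.lt_or_eq with h | h
      · exact connectedComponentIn_subset _ _ (hIco y hy.1 h)
      · rw [h]; exact hn
    have := isPreconnected_Icc.subset_connectedComponentIn
      (left_mem_Icc.2 (hlt z hzG).le) hsub (right_mem_Icc.2 (hlt z hzG).le)
    exact lt_irrefl _ (hlt _ this)
  · by_contra hc
    exact connectedComponentIn_subset _ _ (hIco y hzy.le (not_le.1 hc)) hy

/-- The lower endpoint of a gap of a closed set belongs to the set and is isolated in it from the
right. -/
lemma sInf_gap {E : Set ℝ} (hE : IsClosed E) {G : Set ℝ} (hG : G ∈ gaps E) :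
    sInf G ∈ E ∧ ∃ c > sInf G, ∀ y ∈ E, y < c → y ≤ sInf G := by
  obtain ⟨⟨z, hz, rfl⟩, hb⟩ := hG
  set G := connectedComponentIn Eᶜ z with hGdef
  have hzG : z ∈ G := mem_connectedComponentIn hz
  have hord : G.OrdConnected := isPreconnected_connectedComponentIn.ordConnected
  have hopen : IsOpen G := hE.isOpen_compl.connectedComponentIn
  have hlt : ∀ q ∈ G, sInf G < q := by
    intro q hq
    obtain ⟨ε, hε, hball⟩ := Metric.isOpen_iff.1 hopen q hq
    have : q - ε / 2 ∈ G := hball (by simp [abs_of_pos, hε])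
    have := csInf_le hb.bddBelow this
    linarith
  have hIoc : ∀ y, y ≤ z → sInf G < y → y ∈ G := by
    intro y h1 h2
    obtain ⟨q, hq, hyq⟩ := exists_lt_of_csInf_lt ⟨z, hzG⟩ h2
    exact hord.out hq hzG ⟨hyq.le, h1⟩
  refine ⟨?_, z, hlt z hzG, fun y hy hzy => ?_⟩
  · by_contra hn
    have hsub : Icc (sInf G) z ⊆ Eᶜ := by
      intro y hy
      rcases hy.1.lt_or_eq with h | h
      · exact connectedComponentIn_subset _ _ (hIoc y hy.2 h)
      · rw [← h]; exact hn
    have := isPreconnected_Icc.subset_connectedComponentIn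
      (right_mem_Icc.2 (hlt z hzG).le) hsub (left_mem_Icc.2 (hlt z hzG).le)
    exact lt_irrefl _ (hlt _ this)
  · by_contra hc
    exact connectedComponentIn_subset _ _ (hIoc y hzy.le (not_le.1 hc)) hy

/-- A symmetric compact set of nonnegative numbers containing `0` is a Cantorval as soon as every
point isolated from the left is `RightMixed`: the lower endpoints of gaps are reflections of upper
ones. -/
lemma isCantorval_of_rightMixed {E : Set ℝ} {T : ℝ} (hE : IsCompact E) (h0 : 0 ∈ E)
    (hnn : ∀ y ∈ E, 0 ≤ y) (hsymm : ∀ y ∈ E, T - y ∈ E)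
    (hmix : ∀ p ∈ E, ∀ c < p, (∀ y ∈ E, c < y → p ≤ y) → RightMixed E p) : IsCantorval E := by
  have hsymm' : ∀ y, T - y ∈ E → y ∈ E := fun y hy => by simpa using hsymm _ hy
  obtain ⟨⟨z, hz, v, hv, h0z, hzv, -⟩, u, w, -, huw, -, hI⟩ :=
    hmix 0 h0 (-1) (by norm_num) (fun y hy _ => hnn y hy) 1 one_pos
  refine ⟨⟨0, h0⟩, hE, ⟨_, connectedComponentIn_mem_gaps hz h0 hv h0z hzv⟩, ?_, ?_⟩
  · obtain ⟨I, hI, -⟩ := exists_intervalComponent huw hI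
    exact ⟨I, hI⟩
  intro G hG p hp
  have hGb : Bornology.IsBounded G := hG.2
  rcases hp with rfl | hp
  · obtain ⟨hpE, c, hc, hiso⟩ := sInf_gap hE.isClosed hG
    have hR : RightMixed E (T - sInf G) := by
      refine hmix _ (hsymm _ hpE) (T - c) (by linarith) fun y hy hcy => ?_
      have := hiso _ (hsymm y hy) (by linarith)
      linarith
    constructor
    · intro ε hε
      obtain ⟨⟨z, hz, v, hv, h1, h2, h3⟩, -⟩ := hR ε hε
      have hz' : T - z ∉ E := fun h => hz (hsymm' _ h)
      refine ⟨_, connectedComponentIn_mem_gaps hz' (hsymm v hv) hpE (by linarith) (by linarith),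
        ?_, T - z, mem_connectedComponentIn hz', ?_⟩
      · intro hEq
        have : T - z ∈ G := hEq ▸ mem_connectedComponentIn hz'
        have := csInf_le hGb.bddBelow this
        linarith
      · rw [Metric.mem_ball, Real.dist_eq, abs_lt]
        constructor <;> linarith
    · intro ε hε
      obtain ⟨-, u, v, h1, h2, h3, h4⟩ := hR ε hε
      obtain ⟨I, hI, hmem⟩ := exists_intervalComponent (E := E) (u := T - v) (v := T - u)
        (by linarith) fun y hy => hsymm' y (h4 ⟨by linarith [hy.2], by linarith [hy.1]⟩)
      refine ⟨I, hI, T - v, hmem, ?_, ?_⟩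
      · rw [Metric.mem_ball, Real.dist_eq, abs_lt]
        constructor <;> linarith
      · simp only [mem_singleton_iff]; intro h; linarith
  · obtain rfl : p = sSup G := hp
    obtain ⟨hpE, c, hc, hiso⟩ := sSup_gap hE.isClosed hG
    have hR : RightMixed E (sSup G) := hmix _ hpE c hc hiso
    constructor
    · intro ε hε
      obtain ⟨⟨z, hz, v, hv, h1, h2, h3⟩, -⟩ := hR ε hε
      refine ⟨_, connectedComponentIn_mem_gaps hz hpE hv h1 h2, ?_, z,
        mem_connectedComponentIn hz, ?_⟩
      · intro hEq
        have : z ∈ G := hEq ▸ mem_connectedComponentIn hz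
        have := le_csSup hGb.bddAbove this
        linarith
      · rw [Metric.mem_ball, Real.dist_eq, abs_lt]
        constructor <;> linarith
    · intro ε hε
      obtain ⟨-, u, v, h1, h2, h3, h4⟩ := hR ε hε
      obtain ⟨I, hI, hmem⟩ := exists_intervalComponent h2 h4
      refine ⟨I, hI, u, hmem, ?_, ?_⟩
      · rw [Metric.mem_ball, Real.dist_eq, abs_lt]
        constructor <;> linarith
      · simp only [mem_singleton_iff]; intro h; linarith

/-- An achievement set is a Cantorval if infinitely many terms `x k` exceed their remainder while
being minimal among the terms up to `k`, and if every tail of the series has, arbitrarily close to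
`0`, an interval in which its subsums are dense. -/
lemma isCantorval_range_subsum {x : ℕ → ℝ} (x0 : x 0 = 0) (hpos : ∀ n, 1 ≤ n → 0 < x n)
    (hs : Summable x)
    (hgap : ∀ N, ∃ k ≥ N, subsum x (Ioi k) < x k ∧ ∀ j, 1 ≤ j → j ≤ k → x k ≤ x j)
    (hdense : ∀ N, ∀ ε > 0, ∃ α β : ℝ, 0 < α ∧ α < β ∧ β < ε ∧
      ∀ y ∈ Icc α β, ∀ δ > 0, ∃ B ⊆ Ioi N, |subsum x B - y| < δ) :
    IsCantorval (range (subsum x)) := by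
  have hx : ∀ n, 0 ≤ x n := fun n => by
    rcases Nat.eq_zero_or_pos n with rfl | h
    · exact x0.ge
    · exact (hpos n h).le
  have hcomp := isCompact_range_subsum hs hx
  refine isCantorval_of_rightMixed (T := subsum x univ) hcomp ⟨∅, subsum_empty x⟩ ?_ ?_ ?_
  · rintro _ ⟨A, rfl⟩; exact subsum_nonneg hx A
  · rintro _ ⟨A, rfl⟩; exact ⟨Aᶜ, subsum_compl hs A⟩
  rintro _ ⟨A, rfl⟩ c hc hiso ε hε
  have hxt : Tendsto x atTop (𝓝 0) := hs.tendsto_atTop_zero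
  -- Removing from `A` an index with a small term would produce a point inside the gap.
  obtain ⟨N, hN⟩ : ∃ N, ∀ m, N ≤ m → m ∉ A := by
    obtain ⟨N, hN⟩ := eventually_atTop.1
      (hxt.eventually (gt_mem_nhds (show (0 : ℝ) < subsum x A - c by linarith)))
    refine ⟨N + 1, fun m hm hmA => ?_⟩
    have h1 : subsum x A = subsum x (A \ {m}) + x m := by
      rw [← subsum_singleton x m, ← subsum_union hs disjoint_sdiff_left,
        sdiff_union_of_subset (by simpa using hmA)]
    have h2 := hN m (by omega)
    have h3 := hpos m (by omega)
    have := hiso _ ⟨A \ {m}, rfl⟩ (by linarith)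
    linarith
  have hadd : ∀ M, N ≤ M → ∀ B ⊆ Ici M, subsum x (A ∪ B) = subsum x A + subsum x B := by
    intro M hM B hB
    refine subsum_union hs (Set.disjoint_left.2 fun m hA hmB => hN m ?_ hA)
    exact le_trans hM (hB hmB)
  constructor
  · obtain ⟨K, hK⟩ := eventually_atTop.1 ((tendsto_subsum_Ioi hs).eventually
      (gt_mem_nhds (show (0 : ℝ) < subsum x A - c by linarith)))
    have hK := hK K le_rfl
    -- Beyond `p = subsum x A`, sums of the first `K` terms keep a positive distance `δ` from `p`.
    obtain ⟨δ, hδ, hF⟩ : ∃ δ > 0, ∀ B ⊆ Iic K, subsum x A < subsum x B →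
        subsum x A + δ ≤ subsum x B := by
      have hfin : (subsum x '' {B | B ⊆ Iic K}).Finite :=
        ((Set.finite_Iic K).finite_subsets).image _
      have hfin' : ((subsum x '' {B | B ⊆ Iic K}) ∩ Ioi (subsum x A)).Finite :=
        hfin.subset inter_subset_left
      have hopen := hfin'.isClosed.isOpen_compl
      obtain ⟨δ, hδ, hball⟩ := Metric.isOpen_iff.1 hopen (subsum x A) (by simp)
      refine ⟨δ, hδ, fun B hB hlt => ?_⟩
      by_contra hcon
      refine (hball : Metric.ball _ δ ⊆ _) (?_ : subsum x B ∈ Metric.ball _ δ) ⟨⟨B, hB, rfl⟩, hlt⟩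
      rw [Metric.mem_ball, Real.dist_eq, abs_lt]
      constructor <;> linarith
    obtain ⟨M, hM⟩ := eventually_atTop.1
      (hxt.eventually (gt_mem_nhds (lt_min hδ hε)))
    obtain ⟨k, hk, hrk, hmin⟩ := hgap (max M (max N (K + 1)))
    have hkN : N ≤ k := by omega
    have hkδ := hM k (by omega)
    have hk1 := hkδ.trans_le (min_le_left _ _)
    have hk2 := hkδ.trans_le (min_le_right _ _)
    have hr0 := subsum_nonneg hx (Ioi k)
    have hxk : 0 < x k := hpos k (by omega)
    refine ⟨subsum x A + (subsum x (Ioi k) + x k) / 2, ?_, subsum x A + x k, ?_, by linarith,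
      by linarith, by linarith⟩
    · rintro ⟨B, hB⟩
      have hsplit : subsum x B = subsum x (B ∩ Iic K) + subsum x (B ∩ Ioi K) := by
        rw [← subsum_union hs, ← inter_union_distrib_left, Iic_union_Ioi, inter_univ]
        exact Set.disjoint_left.2 fun m h1 h2 => absurd (mem_Iic.1 h1.2) (not_le.2 (mem_Ioi.1 h2.2))
      have htail : subsum x (B ∩ Ioi K) ≤ subsum x (Ioi K) := subsum_mono hs hx inter_subset_right
      have htail0 := subsum_nonneg hx (B ∩ Ioi K)
      have hle : subsum x (B ∩ Iic K) ≤ subsum x A := by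
        by_contra hcon
        have := hF _ inter_subset_right (not_le.1 hcon)
        linarith
      have hge : subsum x A ≤ subsum x (B ∩ Iic K) := hiso _ ⟨_, rfl⟩ (by linarith)
      -- So the tail of `B` sums to a number strictly between the `k`-th remainder and `x k`.
      by_cases hj : ∃ j ∈ B ∩ Ioi K, j ≤ k
      · obtain ⟨j, hjB, hjk⟩ := hj
        have h1 := le_subsum hs hx hjB
        have h2 := hmin j (by have : K < j := hjB.2; omega) hjk
        linarith
      · push Not at hj
        have := subsum_mono hs hx (show B ∩ Ioi K ⊆ Ioi k from fun j h => hj j h)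
        linarith
    · exact ⟨A ∪ {k}, by rw [hadd k hkN _ (by simp), subsum_singleton]⟩
  · obtain ⟨α, β, hα, hαβ, hβ, hd⟩ := hdense N ε hε
    refine ⟨subsum x A + α, subsum x A + β, by linarith, by linarith, by linarith, ?_⟩
    intro y hy
    rw [← hcomp.isClosed.closure_eq, Metric.mem_closure_iff]
    intro δ hδ
    obtain ⟨B, hB, hBδ⟩ := hd (y - subsum x A) ⟨by linarith [hy.1], by linarith [hy.2]⟩ δ hδ
    refine ⟨_, ⟨A ∪ B, rfl⟩, ?_⟩
    rw [hadd N le_rfl B (hB.trans Ioi_subset_Ici_self), dist_comm, Real.dist_eq]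
    convert hBδ using 2
    ring

/-! ### The sequence -/

/-- The last index of the run of consecutive elements of `S` starting at `n + 1`; it is `n` when
`n + 1 ∉ S`. -/
noncomputable def runEnd (S : Set ℕ) (n : ℕ) : ℕ := sInf {k | n ≤ k ∧ k + 1 ∉ S}

section runEnd

variable {S : Set ℕ}

lemma runEnd_spec (hc : ∀ n, ∃ k, n ≤ k ∧ k + 1 ∉ S) (n : ℕ) :
    n ≤ runEnd S n ∧ runEnd S n + 1 ∉ S :=
  Nat.sInf_mem (s := {k | n ≤ k ∧ k + 1 ∉ S}) (hc n)

lemma runEnd_le {n k : ℕ} (h : n ≤ k) (hk : k + 1 ∉ S) : runEnd S n ≤ k :=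
  Nat.sInf_le (s := {k | n ≤ k ∧ k + 1 ∉ S}) ⟨h, hk⟩

lemma mem_of_le_runEnd {n j : ℕ} (h : n < j) (hj : j ≤ runEnd S n) : j ∈ S := by
  by_contra hcon
  have := runEnd_le (S := S) (n := n) (k := j - 1) (by omega)
    (by rwa [Nat.sub_add_cancel (by omega)])
  omega

lemma runEnd_of_notMem (hc : ∀ n, ∃ k, n ≤ k ∧ k + 1 ∉ S) {n : ℕ} (h : n + 1 ∉ S) :
    runEnd S n = n :=
  le_antisymm (runEnd_le le_rfl h) (runEnd_spec hc n).1

lemma lt_runEnd (hc : ∀ n, ∃ k, n ≤ k ∧ k + 1 ∉ S) {n : ℕ} (h : n + 1 ∈ S) :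
    n + 1 ≤ runEnd S n := by
  obtain ⟨h1, h2⟩ := runEnd_spec hc n
  exact Nat.lt_of_le_of_ne h1 fun he => h2 (he ▸ h)

lemma runEnd_succ (hc : ∀ n, ∃ k, n ≤ k ∧ k + 1 ∉ S) {n : ℕ} (h : n + 1 ∈ S) :
    runEnd S (n + 1) = runEnd S n := by
  apply le_antisymm
  · exact runEnd_le (lt_runEnd hc h) (runEnd_spec hc n).2
  · exact runEnd_le (Nat.le_of_succ_le (runEnd_spec hc (n + 1)).1) (runEnd_spec hc (n + 1)).2

end runEnd

open Classical in
/-- The sequence: `2 · 2⁻ⁿ` for `n ∈ S`, and `2⁻ⁿ` for `n ∉ S`, except that the index immediately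
preceding a run of `S` with last element `e` carries `3 · 2⁻ᵉ`. -/
noncomputable def kseq (S : Set ℕ) (n : ℕ) : ℝ :=
  if n = 0 then 0
  else if n ∈ S then 2 * (1 / 2) ^ n
  else if n + 1 ∈ S then 3 * (1 / 2) ^ runEnd S n
  else (1 / 2) ^ n

section kseq

variable {S : Set ℕ}

lemma kseq_of_mem {n : ℕ} (hn : n ≠ 0) (h : n ∈ S) : kseq S n = 2 * (1 / 2) ^ n := by
  simp only [kseq, if_neg hn, if_pos h]

lemma kseq_of_notMem_of_mem {n : ℕ} (hn : n ≠ 0) (h : n ∉ S) (h' : n + 1 ∈ S) :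
    kseq S n = 3 * (1 / 2) ^ runEnd S n := by
  simp only [kseq, if_neg hn, if_neg h, if_pos h']

lemma kseq_of_notMem_of_notMem {n : ℕ} (hn : n ≠ 0) (h : n ∉ S) (h' : n + 1 ∉ S) :
    kseq S n = (1 / 2) ^ n := by
  simp only [kseq, if_neg hn, if_neg h, if_neg h']

lemma half_pow_le {m n : ℕ} (h : m ≤ n) : ((1 : ℝ) / 2) ^ n ≤ (1 / 2) ^ m :=
  pow_le_pow_of_le_one (by norm_num) (by norm_num) h

lemma half_pow_succ (n : ℕ) : ((1 : ℝ) / 2) ^ n = 2 * (1 / 2) ^ (n + 1) := by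
  rw [pow_succ]; ring

lemma half_pow_pos (n : ℕ) : 0 < ((1 : ℝ) / 2) ^ n := by positivity

lemma tendsto_half_pow : Tendsto (fun n : ℕ => ((1 : ℝ) / 2) ^ n) atTop (𝓝 0) :=
  tendsto_pow_atTop_nhds_zero_of_lt_one (by norm_num) (by norm_num)

lemma kseq_pos {n : ℕ} (hn : 1 ≤ n) : 0 < kseq S n := by
  have hn : n ≠ 0 := by omega
  unfold kseq
  rw [if_neg hn]
  split_ifs <;> positivity

lemma kseq_nonneg (n : ℕ) : 0 ≤ kseq S n := by
  unfold kseq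
  split_ifs <;> positivity

lemma summable_kseq (hc : ∀ n, ∃ k, n ≤ k ∧ k + 1 ∉ S) : Summable (kseq S) := by
  refine Summable.of_nonneg_of_le kseq_nonneg (fun n => ?_)
    ((summable_geometric_of_lt_one (r := (1 : ℝ) / 2) (by norm_num) (by norm_num)).mul_left 3)
  have h1 := half_pow_pos n
  have h2 := half_pow_le (runEnd_spec hc n).1
  unfold kseq
  split_ifs <;> linarith

/-- Upper bound for the remainders; the right-hand side dominates them because it decreases by at
least `kseq S (n + 1)` from `n` to `n + 1`. -/
lemma subsum_kseq_Ioi_le (hc : ∀ n, ∃ k, n ≤ k ∧ k + 1 ∉ S) (n : ℕ) :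
    subsum (kseq S) (Ioi n) ≤ 2 * (1 / 2) ^ n - 1 / 3 * (1 / 2) ^ runEnd S n := by
  have hs := summable_kseq hc
  have ht1 := tendsto_half_pow
  have ht2 : Tendsto (fun n => ((1 : ℝ) / 2) ^ runEnd S n) atTop (𝓝 0) :=
    ht1.comp (tendsto_atTop_mono (fun n => (runEnd_spec hc n).1) tendsto_id)
  have hanti : Antitone fun n => 2 * ((1 : ℝ) / 2) ^ n - 1 / 3 * (1 / 2) ^ runEnd S n
      - subsum (kseq S) (Ioi n) := by
    refine antitone_nat_of_succ_le fun n => ?_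
    rw [subsum_Ioi_succ hs n]
    have e1 := half_pow_succ n
    have e2 := half_pow_pos (n + 1)
    by_cases h1 : n + 1 ∈ S
    · rw [kseq_of_mem (by omega) h1, runEnd_succ hc h1]
      linarith
    · rw [runEnd_of_notMem hc h1]
      by_cases h2 : n + 1 + 1 ∈ S
      · rw [kseq_of_notMem_of_mem (by omega) h1 h2]
        have e3 := half_pow_le (lt_runEnd hc h2)
        have e4 := half_pow_succ (n + 1)
        linarith
      · rw [kseq_of_notMem_of_notMem (by omega) h1 h2, runEnd_of_notMem hc h2]
        linarith
  have hlim := ((ht1.const_mul 2).sub (ht2.const_mul (1 / 3))).sub (tendsto_subsum_Ioi hs)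
  rw [mul_zero, mul_zero, sub_zero, sub_zero] at hlim
  have := hanti.le_of_tendsto hlim n
  linarith

/-- Lower bound for the remainders, by the same telescoping in the opposite direction. -/
lemma le_subsum_kseq_Ioi (hc : ∀ n, ∃ k, n ≤ k ∧ k + 1 ∉ S) (n : ℕ) :
    2 * (1 / 2) ^ n - (1 / 2) ^ runEnd S n ≤ subsum (kseq S) (Ioi n) := by
  have hs := summable_kseq hc
  have ht1 := tendsto_half_pow
  have ht2 : Tendsto (fun n => ((1 : ℝ) / 2) ^ runEnd S n) atTop (𝓝 0) :=
    ht1.comp (tendsto_atTop_mono (fun n => (runEnd_spec hc n).1) tendsto_id)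
  have hmono : Monotone fun n => 2 * ((1 : ℝ) / 2) ^ n - (1 / 2) ^ runEnd S n
      - subsum (kseq S) (Ioi n) := by
    refine monotone_nat_of_le_succ fun n => ?_
    rw [subsum_Ioi_succ hs n]
    have e1 := half_pow_succ n
    by_cases h1 : n + 1 ∈ S
    · rw [kseq_of_mem (by omega) h1, runEnd_succ hc h1]
      linarith
    · rw [runEnd_of_notMem hc h1]
      by_cases h2 : n + 1 + 1 ∈ S
      · rw [kseq_of_notMem_of_mem (by omega) h1 h2]
        have e3 := half_pow_pos (runEnd S (n + 1))
        linarith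
      · rw [kseq_of_notMem_of_notMem (by omega) h1 h2, runEnd_of_notMem hc h2]
        linarith
  have hlim := ((ht1.const_mul 2).sub ht2).sub (tendsto_subsum_Ioi hs)
  rw [mul_zero, sub_zero, sub_zero] at hlim
  have := hmono.ge_of_tendsto hlim n
  linarith

lemma kakeyaSet_kseq (hS : S ⊆ {n | 1 ≤ n}) (hc : ∀ n, ∃ k, n ≤ k ∧ k + 1 ∉ S) :
    kakeyaSet (kseq S) = S := by
  ext n
  simp only [kakeyaSet, mem_ofPred_eq, remainder_eq]
  constructor
  · rintro ⟨hn, h⟩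
    by_contra hcon
    have hlow := le_subsum_kseq_Ioi hc n
    by_cases h2 : n + 1 ∈ S
    · rw [kseq_of_notMem_of_mem (by omega) hcon h2] at h
      have e1 := half_pow_le (lt_runEnd hc h2)
      have e2 := half_pow_succ n
      linarith
    · rw [kseq_of_notMem_of_notMem (by omega) hcon h2] at h
      rw [runEnd_of_notMem hc h2] at hlow
      linarith
  · intro h
    have hn : 1 ≤ n := hS h
    refine ⟨hn, ?_⟩
    rw [kseq_of_mem (by omega) h]
    have := subsum_kseq_Ioi_le hc n
    have := half_pow_pos (runEnd S n)
    linarith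

/-- The last element `k` of a run of `S` carries the smallest term so far. -/
lemma kseq_min {k : ℕ} (hk : k ∈ S) (hk' : k + 1 ∉ S) {j : ℕ}
    (hj : 1 ≤ j) (hjk : j ≤ k) : kseq S k ≤ kseq S j := by
  rw [kseq_of_mem (by omega) hk]
  have e0 := half_pow_le hjk
  by_cases h1 : j ∈ S
  · rw [kseq_of_mem (by omega) h1]; linarith
  by_cases h2 : j + 1 ∈ S
  · rw [kseq_of_notMem_of_mem (by omega) h1 h2]
    have e1 := half_pow_le (runEnd_le hjk hk')
    have e2 := half_pow_pos k
    linarith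
  · rw [kseq_of_notMem_of_notMem (by omega) h1 h2]
    have : j ≠ k := fun h => h1 (h ▸ hk)
    have e1 := half_pow_le (show j + 1 ≤ k by omega)
    have e2 := half_pow_succ j
    linarith

/-! ### Intervals in the tails -/

/-- The number `y` is a sum of terms of `kseq S` with distinct indices in `(m, n]`. -/
def IsFinSum (S : Set ℕ) (m n : ℕ) (y : ℝ) : Prop :=
  ∃ B ⊆ Finset.Ioc m n, ∑ i ∈ B, kseq S i = y

lemma IsFinSum.mono {m n : ℕ} {y : ℝ} (h : IsFinSum S m n y) : IsFinSum S m (n + 1) y := by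
  obtain ⟨B, hB, rfl⟩ := h
  exact ⟨B, hB.trans (Finset.Ioc_subset_Ioc_right (by omega)), rfl⟩

lemma IsFinSum.add {m n : ℕ} {y : ℝ} (hmn : m ≤ n) (h : IsFinSum S m n y) :
    IsFinSum S m (n + 1) (y + kseq S (n + 1)) := by
  obtain ⟨B, hB, rfl⟩ := h
  refine ⟨insert (n + 1) B, ?_, ?_⟩
  · intro i hi
    rcases Finset.mem_insert.1 hi with rfl | hi
    · simp; omega
    · have := Finset.mem_Ioc.1 (hB hi)
      simp; omega
  · rw [Finset.sum_insert, add_comm]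
    intro hmem
    have := Finset.mem_Ioc.1 (hB hmem)
    omega

/-- All multiples of `2⁻ⁿ` in an interval that contains `[2/3 · (2⁻ᵐ - 2⁻ⁿ), 2⁻ᵐ)` are sums of terms
with distinct indices in `(m, n]`. -/
def Filled (S : Set ℕ) (m n : ℕ) : Prop :=
  ∃ a : ℤ, 3 * (a * (1 / 2 : ℝ) ^ n) ≤ 2 * (1 / 2) ^ m - 2 * (1 / 2) ^ n ∧
    ∀ t : ℤ, a ≤ t → t * (1 / 2 : ℝ) ^ n < (1 / 2) ^ m → IsFinSum S m n (t * (1 / 2) ^ n)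

lemma filled_self (m : ℕ) : Filled S m m := by
  refine ⟨0, by simp, fun t ht0 ht => ⟨∅, by simp, ?_⟩⟩
  have h := half_pow_pos m
  have : (t : ℝ) < 1 := by
    by_contra hcon
    nlinarith [not_lt.1 hcon]
  have : t < 1 := by exact_mod_cast this
  obtain rfl : t = 0 := by omega
  simp

/-- A stretch of indices from `n + 1 ∉ S` to the end `e` of the run of `S` that follows (possibly
empty, `e = n + 1`) preserves being filled. -/
lemma Filled.step (hc : ∀ n, ∃ k, n ≤ k ∧ k + 1 ∉ S) {m n : ℕ} (hmn : m ≤ n) (hn : n + 1 ∉ S)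
    (h : Filled S m n) : Filled S m (runEnd S (n + 1)) := by
  obtain ⟨a, ha, hf⟩ := h
  by_cases h2 : n + 1 + 1 ∈ S
  swap
  · rw [runEnd_of_notMem hc h2]
    have e1 := half_pow_succ n
    have e2 := half_pow_pos (n + 1)
    have hx := kseq_of_notMem_of_notMem (by omega) hn h2
    rw [e1] at ha hf
    refine ⟨2 * a, by push_cast; linarith, fun t hat ht => ?_⟩
    obtain ⟨s, rfl | rfl⟩ := Int.even_or_odd' t
    · convert (hf s (by omega) (by push_cast at ht; linarith)).mono using 1
      push_cast; ring
    · convert (hf s (by omega) (by push_cast at ht; linarith)).add hmn using 1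
      rw [hx]; push_cast; ring
  set e := runEnd S (n + 1) with he
  have hne : n + 1 + 1 ≤ e := lt_runEnd hc h2
  -- Halving the step at each index of the run, with the term `3 · 2⁻ᵉ` of index `n + 1` kept apart.
  have key : ∀ k, n + 1 ≤ k → k ≤ e → ∃ a : ℤ,
      3 * (a * (2 * (1 / 2 : ℝ) ^ k)) ≤ 2 * (1 / 2) ^ m - 8 * (1 / 2) ^ e ∧
      ∀ t : ℤ, a ≤ t → t * (2 * (1 / 2 : ℝ) ^ k) < (1 / 2) ^ m →
        IsFinSum S m k (t * (2 * (1 / 2) ^ k)) ∧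
        IsFinSum S m k (t * (2 * (1 / 2) ^ k) + 3 * (1 / 2) ^ e) := by
    intro k hk
    induction k, hk using Nat.le_induction with
    | base =>
      intro _
      have e1 := half_pow_succ n
      have e3 := half_pow_succ (n + 1)
      have e4 := half_pow_le hne
      rw [e1] at ha hf
      refine ⟨a, by linarith, fun t hat ht => ⟨(hf t hat ht).mono, ?_⟩⟩
      have := (hf t hat ht).add hmn
      rwa [kseq_of_notMem_of_mem (by omega) hn h2, ← he] at this
    | succ k hk ih =>
      intro hke
      obtain ⟨a, ha, hf⟩ := ih (by omega)
      have e1 := half_pow_succ k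
      have e2 := half_pow_pos (k + 1)
      have hx : kseq S (k + 1) = 2 * (1 / 2) ^ (k + 1) :=
        kseq_of_mem (by omega) (mem_of_le_runEnd (n := n + 1) (by omega) hke)
      rw [e1] at ha hf
      refine ⟨2 * a, by push_cast; linarith, fun t hat ht => ?_⟩
      obtain ⟨s, rfl | rfl⟩ := Int.even_or_odd' t
      · obtain ⟨f1, f2⟩ := hf s (by omega) (by push_cast at ht; linarith)
        constructor
        · convert f1.mono using 1
          push_cast; ring
        · convert f2.mono using 1
          push_cast; ring
      · obtain ⟨f1, f2⟩ := hf s (by omega) (by push_cast at ht; linarith)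
        constructor
        · convert f1.add (by omega) using 1
          rw [hx]; push_cast; ring
        · convert f2.add (by omega) using 1
          rw [hx]; push_cast; ring
  -- In units of `2⁻ᵉ`, even numbers are reached directly and odd ones with the help of `3`.
  obtain ⟨a, ha, hf⟩ := key e (by omega) le_rfl
  have e2 := half_pow_pos e
  refine ⟨2 * a + 2, by push_cast; linarith, fun t hat ht => ?_⟩
  obtain ⟨s, rfl | rfl⟩ := Int.even_or_odd' t
  · convert (hf s (by omega) (by push_cast at ht; linarith)).1 using 1
    push_cast; ring
  · convert (hf (s - 1) (by omega) (by push_cast at ht ⊢; linarith)).2 using 1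
    push_cast; ring

lemma exists_filled (hc : ∀ n, ∃ k, n ≤ k ∧ k + 1 ∉ S) {m : ℕ} (hm : m + 1 ∉ S) (N : ℕ) :
    ∃ n ≥ N, m ≤ n ∧ n + 1 ∉ S ∧ Filled S m n := by
  induction N with
  | zero => exact ⟨m, by omega, le_rfl, hm, filled_self m⟩
  | succ N ih =>
    obtain ⟨n, h1, h2, h3, h4⟩ := ih
    have hr := runEnd_spec hc (n + 1)
    exact ⟨runEnd S (n + 1), by omega, by omega, hr.2, h4.step hc h2 h3⟩

/-- For `m + 1 ∉ S`, the subsums of the tail after `m` are dense in `[2/3 · 2⁻ᵐ, 2⁻ᵐ]`. -/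
lemma tail_dense (hc : ∀ n, ∃ k, n ≤ k ∧ k + 1 ∉ S) {m : ℕ} (hm : m + 1 ∉ S) {y : ℝ}
    (hy : y ∈ Icc (2 / 3 * (1 / 2 : ℝ) ^ m) ((1 / 2) ^ m)) {δ : ℝ} (hδ : 0 < δ) :
    ∃ B ⊆ Ioi m, |subsum (kseq S) B - y| < δ := by
  obtain ⟨N, hN⟩ := eventually_atTop.1 (tendsto_half_pow.eventually (gt_mem_nhds hδ))
  obtain ⟨n, hn, -, -, a, ha, hf⟩ := exists_filled hc hm N
  have hδn := hN n hn
  have hp := half_pow_pos n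
  have hlt : ((⌈y / (1 / 2 : ℝ) ^ n⌉ - 1 : ℤ) : ℝ) * (1 / 2) ^ n < y := by
    rw [← lt_div_iff₀ hp]
    have := Int.ceil_lt_add_one (y / (1 / 2 : ℝ) ^ n)
    push_cast; linarith
  have hge : y - (1 / 2) ^ n ≤ ((⌈y / (1 / 2 : ℝ) ^ n⌉ - 1 : ℤ) : ℝ) * (1 / 2) ^ n := by
    have := (div_le_iff₀ hp).1 (Int.le_ceil (y / (1 / 2 : ℝ) ^ n))
    push_cast; linarith
  obtain ⟨B, hB, hsum⟩ := hf (⌈y / (1 / 2 : ℝ) ^ n⌉ - 1)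
    (by
      have : a < ⌈y / (1 / 2 : ℝ) ^ n⌉ := by
        rw [Int.lt_ceil, lt_div_iff₀ hp]
        linarith [hy.1]
      omega)
    (by linarith [hy.2])
  refine ⟨B, fun i hi => (Finset.mem_Ioc.1 (hB hi)).1, ?_⟩
  rw [subsum_finset, hsum, abs_lt]
  constructor <;> linarith

end kseq

/-- (Nowakowski) For every infinite set `S` of positive integers with infinite complement,
there is a convergent series of positive terms whose set of Kakeya conditions is `S` and
whose achievement set is a Cantorval. -/
theorem exists_cantorval_achievement_with_kakeyaSet (S : Set ℕ)
    (hS : S ⊆ {n | 1 ≤ n}) (hSinf : S.Infinite)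
    (hScinf : ({n : ℕ | 1 ≤ n} \ S).Infinite) :
    ∃ x : ℕ → ℝ, (∀ n, 1 ≤ n → 0 < x n) ∧ Summable x ∧
      kakeyaSet x = S ∧ IsCantorval (achievementSet x) := by
  have hc : ∀ n, ∃ k, n ≤ k ∧ k + 1 ∉ S := by
    intro n
    obtain ⟨k, hk, hnk⟩ := hScinf.exists_gt n
    exact ⟨k - 1, by omega, by rw [Nat.sub_add_cancel hk.1]; exact hk.2⟩
  have hs := summable_kseq hc
  have x0 : kseq S 0 = 0 := by simp [kseq]
  refine ⟨kseq S, fun n hn => kseq_pos hn, hs, kakeyaSet_kseq hS hc, ?_⟩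
  rw [achievementSet_eq_range x0 hs]
  refine isCantorval_range_subsum x0 (fun n hn => kseq_pos hn) hs ?_ ?_
  · intro N
    obtain ⟨s, hsS, hNs⟩ := hSinf.exists_gt N
    obtain ⟨h1, h2⟩ := runEnd_spec hc s
    have hk : runEnd S s ∈ S := by
      rcases h1.eq_or_lt with h | h
      · rw [← h]; exact hsS
      · exact mem_of_le_runEnd h le_rfl
    refine ⟨runEnd S s, by omega, ?_, fun j hj hjk => kseq_min hk h2 hj hjk⟩
    have hmem : runEnd S s ∈ kakeyaSet (kseq S) := by rwa [kakeyaSet_kseq hS hc]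
    rw [← remainder_eq]
    exact hmem.2
  · intro N ε hε
    obtain ⟨M, hM⟩ := eventually_atTop.1 (tendsto_half_pow.eventually (gt_mem_nhds hε))
    obtain ⟨m, hm, hmS⟩ := hc (max M N)
    have hp := half_pow_pos m
    refine ⟨2 / 3 * (1 / 2) ^ m, (1 / 2) ^ m, by linarith, by linarith, hM m (by omega), ?_⟩
    intro y hy δ hδ
    obtain ⟨B, hB, hBδ⟩ := tail_dense hc hmS hy hδ
    exact ⟨B, hB.trans (Ioi_subset_Ioi (by omega)), hBδ⟩
end

section
/- (Guthrie–Nymann) Let c : ℕ → ℝ be defined by c(2n−1) = 3·4^{−n} and c(2n) = 2·4^{−n} for all n ≥ 1. Then ∑ₙ c(n) < ∞, K(c) = { n ∈ ℕ : n is even }, and the achievement set E(c) is a Cantorval. -/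
/-!
Write `E` for the achievement set. Grouping the terms of the series in pairs shows that `E` is
compact, lies in `[0, 5/3]`, is symmetric about `5/6`, and satisfies
`E = ⋃ (d + E) / 4` over the digits `d ∈ {0, 2, 3, 5}`. These facts (`IsDigitSet`) suffice for the
topological part.

Iterating the self-similarity, `E = ⋃ (m + E) / 4 ^ n` over the integers `m` having an `n`-digit
expansion (`levelInts n`). Since the digits are a complete residue system mod `4`, every integer in
`[(2 * 4 ^ n - 2) / 3, 4 ^ n - 1]` has such an expansion (`mem_levelInts`); hence `E` contains
`[2/3, 1)` by density and closedness (`IsDigitSet.Ico_subset`). On the other hand `11/24 ∉ E`.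

Let `b` be the right endpoint of a gap `(a, b)`, and let `n` satisfy `5/3 < 4 ^ n * (b - a)`. A piece
`(m + E) / 4 ^ n` is too short to straddle the gap, so the piece containing `b` starts at `b`, the
pieces starting before `b` end before `b`, and all others start at `b + 1 / 4 ^ n` or later. Thus
`E ∩ [b, b + 1 / 4 ^ n)` is a scaled copy of `E ∩ [0, 1)`: it contains the copy of `[2/3, 3/4]` and
misses the copy of `11/24` (`IsDigitSet.right_of_gap`). Letting `n` grow, intervals and gaps
accumulate at `b`; left endpoints are handled by symmetry.
-/

open Set Filter Topology MeasureTheory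
open scoped Pointwise

/-! ### Integers with expansions in the digits 0, 2, 3, 5 -/

/-- The integers `∑_{k < n} d k * 4 ^ k` with digits `d k ∈ {0, 2, 3, 5}`. -/
def levelInts : ℕ → Set ℤ
  | 0 => {0}
  | n + 1 => {m | ∃ k ∈ levelInts n, ∃ d ∈ ({0, 2, 3, 5} : Set ℤ), m = 4 * k + d}

lemma mem_levelInts (n : ℕ) : ∀ m : ℤ, 2 * 4 ^ n - 2 ≤ 3 * m → m ≤ 4 ^ n - 1 →
    m ∈ levelInts n := by
  induction n with
  | zero =>
    intro m h1 h2
    norm_num at h1 h2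
    have : m = 0 := by omega
    simp [levelInts, this]
  | succ n ih =>
    intro m h1 h2
    rw [pow_succ] at h1 h2
    -- The lower bound is the integer `L` with `3 * L = 2 * 4 ^ n - 2`; integrality is used below.
    obtain ⟨L, hL⟩ : (3 : ℤ) ∣ 2 * 4 ^ n - 2 := by
      have h := sub_dvd_pow_sub_pow (4 : ℤ) 1 n
      rw [one_pow] at h
      obtain ⟨t, ht⟩ := h
      exact ⟨2 * t, by linarith⟩
    generalize (4 : ℤ) ^ n = N at *
    have key : ∀ d ∈ ({0, 2, 3, 5} : Set ℤ), (∃ k, m = 4 * k + d ∧ 2 * N - 2 ≤ 3 * k ∧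
        k ≤ N - 1) → m ∈ levelInts (n + 1) := by
      rintro d hd ⟨k, rfl, h3, h4⟩
      exact ⟨k, ih k h3 h4, d, hd, rfl⟩
    have hm : m % 4 = 0 ∨ m % 4 = 1 ∨ m % 4 = 2 ∨ m % 4 = 3 := by omega
    rcases hm with h | h | h | h
    · exact key 0 (by simp) ⟨m / 4, by omega, by omega, by omega⟩
    · exact key 5 (by simp) ⟨m / 4 - 1, by omega, by omega, by omega⟩
    · exact key 2 (by simp) ⟨m / 4, by omega, by omega, by omega⟩
    · exact key 3 (by simp) ⟨m / 4, by omega, by omega, by omega⟩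

/-! ### Sets of base-4 expansions in the digits 0, 2, 3, 5 -/

/-- The properties of the set of all sums `∑_{k ≥ 1} d k / 4 ^ k` with digits `d k ∈ {0, 2, 3, 5}`
on which its topological description rests. -/
structure IsDigitSet (E : Set ℝ) : Prop where
  compact : IsCompact E
  zero_mem : (0 : ℝ) ∈ E
  nonneg : ∀ x ∈ E, 0 ≤ x
  le : ∀ x ∈ E, x ≤ 5 / 3
  symm : ∀ x ∈ E, 5 / 3 - x ∈ E
  self_similar : ∀ x, x ∈ E ↔ ∃ d ∈ ({0, 2, 3, 5} : Set ℤ), 4 * x - d ∈ E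

namespace IsDigitSet

variable {E : Set ℝ}

lemma mem_iff_level (h : IsDigitSet E) (n : ℕ) :
    ∀ x, x ∈ E ↔ ∃ m ∈ levelInts n, 4 ^ n * x - m ∈ E := by
  induction n with
  | zero => intro x; simp [levelInts]
  | succ n ih =>
    intro x
    rw [ih x]
    constructor
    · rintro ⟨m, hm, hx⟩
      obtain ⟨d, hd, hx⟩ := (h.self_similar _).1 hx
      refine ⟨4 * m + d, ⟨m, hm, d, hd, rfl⟩, ?_⟩
      convert hx using 1
      push_cast
      ring
    · rintro ⟨_, ⟨m, hm, d, hd, rfl⟩, hx⟩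
      refine ⟨m, hm, (h.self_similar _).2 ⟨d, hd, ?_⟩⟩
      convert hx using 1
      push_cast
      ring

lemma level_mem (h : IsDigitSet E) {n : ℕ} {m : ℤ} (hm : m ∈ levelInts n) :
    (m : ℝ) / 4 ^ n ∈ E := by
  refine (h.mem_iff_level n _).2 ⟨m, hm, ?_⟩
  have : (4 : ℝ) ^ n * (m / 4 ^ n) - m = 0 := by field_simp; ring
  rw [this]
  exact h.zero_mem

lemma not_mem (h : IsDigitSet E) : (11 / 24 : ℝ) ∉ E := by
  intro hx
  obtain ⟨d, hd, hx⟩ := (h.self_similar _).1 hx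
  have h1 := h.nonneg _ hx
  have h2 := h.le _ hx
  simp only [mem_insert_iff, mem_singleton_iff] at hd
  rcases hd with rfl | rfl | rfl | rfl <;> push_cast at h1 h2 <;> linarith

lemma Ico_subset (h : IsDigitSet E) : Ico (2 / 3 : ℝ) 1 ⊆ E := by
  rintro x ⟨hx1, hx2⟩
  have hmem : ∀ n : ℕ, (⌊(4 : ℝ) ^ n * x⌋ : ℝ) / 4 ^ n ∈ E := by
    intro n
    have hN : (0 : ℝ) < 4 ^ n := by positivity
    apply h.level_mem
    apply mem_levelInts
    · have h1 : (4 : ℝ) ^ n * x < ⌊(4 : ℝ) ^ n * x⌋ + 1 := Int.lt_floor_add_one _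
      -- The real estimate only gives `2 * 4 ^ n < 3 * (m + 1)`; divisibility by `3` does the rest.
      have h2 : (2 : ℤ) * 4 ^ n < 3 * (⌊(4 : ℝ) ^ n * x⌋ + 1) := by
        have : (2 : ℝ) * 4 ^ n < 3 * (⌊(4 : ℝ) ^ n * x⌋ + 1) := by nlinarith
        exact_mod_cast this
      obtain ⟨t, ht⟩ : (3 : ℤ) ∣ 4 ^ n - 1 := by
        have h := sub_dvd_pow_sub_pow (4 : ℤ) 1 n
        rwa [one_pow] at h
      omega
    · have h1 : ⌊(4 : ℝ) ^ n * x⌋ < (4 : ℤ) ^ n := by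
        rw [Int.floor_lt]
        push_cast
        nlinarith
      omega
  have hlim : Tendsto (fun n : ℕ => (⌊(4 : ℝ) ^ n * x⌋ : ℝ) / 4 ^ n) atTop (𝓝 x) := by
    have hz : Tendsto (fun n : ℕ => x - (1 / 4 : ℝ) ^ n) atTop (𝓝 x) := by
      simpa using (tendsto_pow_atTop_nhds_zero_of_lt_one (r := (1 / 4 : ℝ))
        (by norm_num) (by norm_num)).const_sub x
    refine tendsto_of_tendsto_of_tendsto_of_le_of_le hz tendsto_const_nhds ?_ ?_
    · intro n
      have hN : (0 : ℝ) < 4 ^ n := by positivity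
      have h1 : (4 : ℝ) ^ n * x < ⌊(4 : ℝ) ^ n * x⌋ + 1 := Int.lt_floor_add_one _
      simp only [one_div, inv_pow]
      rw [le_div_iff₀ hN, sub_mul, inv_mul_cancel₀ hN.ne']
      linarith
    · intro n
      have hN : (0 : ℝ) < 4 ^ n := by positivity
      have h1 : (⌊(4 : ℝ) ^ n * x⌋ : ℝ) ≤ 4 ^ n * x := Int.floor_le _
      simp only
      rw [div_le_iff₀ hN]
      linarith
  exact h.compact.isClosed.mem_of_tendsto hlim (Eventually.of_forall hmem)

/-- Immediately to the right of a gap `(a, b)`, the set omits a point `q` and then contains an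
interval `[u, v]`. -/
lemma right_of_gap (h : IsDigitSet E) {a b : ℝ} (hab : a < b) (hb : b ∈ E)
    (hgap : ∀ x ∈ E, a < x → b ≤ x) {ε : ℝ} (hε : 0 < ε) :
    ∃ q u v, b < q ∧ q < u ∧ u < v ∧ v < b + ε ∧ q ∉ E ∧ Icc u v ⊆ E := by
  obtain ⟨n, hn⟩ := pow_unbounded_of_one_lt (max (5 / 3 / (b - a)) (1 / ε))
    (by norm_num : (1 : ℝ) < 4)
  have hN : (0 : ℝ) < 4 ^ n := by positivity
  have hlev := h.mem_iff_level n
  have hlevel := fun m (hm : m ∈ levelInts n) => h.level_mem hm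
  generalize (4 : ℝ) ^ n = N at *
  have h1 : 5 / 3 < N * (b - a) :=
    (div_lt_iff₀ (by linarith)).1 (lt_of_le_of_lt (le_max_left _ _) hn)
  have h2 : 1 < N * ε := (div_lt_iff₀ hε).1 (lt_of_le_of_lt (le_max_right _ _) hn)
  obtain ⟨m, hm, hme⟩ := (hlev b).1 hb
  have hmN : (m : ℝ) = N * b := by
    have h3 := h.nonneg _ hme
    have h4 := h.le _ hme
    have h5 : b ≤ m / N := hgap _ (hlevel m hm) (by rw [lt_div_iff₀ hN]; linarith)
    rw [le_div_iff₀ hN] at h5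
    linarith
  have hsc : ∀ t : ℝ, N * (b + t / N) = m + t := by
    intro t
    rw [hmN]
    field_simp
  refine ⟨b + 11 / 24 / N, b + 2 / 3 / N, b + 3 / 4 / N, ?_, ?_, ?_, ?_, ?_, ?_⟩
  · have : 0 < 11 / 24 / N := by positivity
    linarith
  · have : 11 / 24 / N < 2 / 3 / N := div_lt_div_of_pos_right (by norm_num) hN
    linarith
  · have : 2 / 3 / N < 3 / 4 / N := div_lt_div_of_pos_right (by norm_num) hN
    linarith
  · have : 3 / 4 / N < ε := by rw [div_lt_iff₀ hN]; linarith
    linarith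
  · intro hq
    obtain ⟨m', hm', hq⟩ := (hlev _).1 hq
    rw [hsc] at hq
    have h3 := h.nonneg _ hq
    have h4 := h.le _ hq
    rcases lt_trichotomy m' m with hlt | rfl | hlt
    · have hlt' : (m' : ℝ) < m := by exact_mod_cast hlt
      have h5 : (m' : ℝ) / N ≤ a := by
        by_contra! hcon
        have h6 := hgap _ (hlevel m' hm') hcon
        rw [le_div_iff₀ hN] at h6
        linarith
      rw [div_le_iff₀ hN] at h5
      linarith
    · rw [add_sub_cancel_left] at hq
      exact h.not_mem hq
    · have hlt' : (m : ℝ) + 1 ≤ m' := by exact_mod_cast hlt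
      linarith
  · rintro x ⟨hx1, hx2⟩
    refine (hlev x).2 ⟨m, hm, h.Ico_subset ⟨?_, ?_⟩⟩
    · have := mul_le_mul_of_nonneg_left hx1 hN.le
      rw [hsc] at this
      linarith
    · have := mul_le_mul_of_nonneg_left hx2 hN.le
      rw [hsc] at this
      linarith

lemma left_of_gap (h : IsDigitSet E) {a b : ℝ} (hab : a < b) (ha : a ∈ E)
    (hgap : ∀ x ∈ E, x < b → x ≤ a) {ε : ℝ} (hε : 0 < ε) :
    ∃ q u v, q < a ∧ v < q ∧ u < v ∧ a - ε < u ∧ q ∉ E ∧ Icc u v ⊆ E := by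
  obtain ⟨q, u, v, h1, h2, h3, h4, h5, h6⟩ := h.right_of_gap (a := 5 / 3 - b) (b := 5 / 3 - a)
    (by linarith) (h.symm a ha)
    (fun x hx hlt => by linarith [hgap _ (h.symm x hx) (by linarith)]) hε
  refine ⟨5 / 3 - q, 5 / 3 - v, 5 / 3 - u, by linarith, by linarith, by linarith, by linarith,
    ?_, ?_⟩
  · intro hq
    apply h5
    simpa using h.symm _ hq
  · rintro x ⟨hx1, hx2⟩
    have := h.symm _ (h6 (a := 5 / 3 - x) ⟨by linarith, by linarith⟩)
    simpa using this

end IsDigitSet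

/-! ### Gaps and interval components of subsets of the line -/

lemma component_mem_gaps {E : Set ℝ} {e q f : ℝ} (he : e ∈ E) (hf : f ∈ E) (hq : q ∉ E)
    (heq : e < q) (hqf : q < f) : connectedComponentIn Eᶜ q ∈ gaps E := by
  refine ⟨⟨q, hq, rfl⟩, (Metric.isBounded_Icc e f).subset ?_⟩
  have hsub := connectedComponentIn_subset Eᶜ q
  have hord := (isPreconnected_connectedComponentIn (F := Eᶜ) (x := q)).ordConnected
  have hqm : q ∈ connectedComponentIn Eᶜ q := mem_connectedComponentIn hq
  intro x hx
  constructor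
  · by_contra! hcon
    exact hsub (hord.out hx hqm ⟨hcon.le, heq.le⟩) he
  · by_contra! hcon
    exact hsub (hord.out hqm hx ⟨hqf.le, hcon.le⟩) hf

lemma component_mem_intervalComponents {E : Set ℝ} {u v : ℝ} (huv : u < v) (hE : Icc u v ⊆ E) :
    connectedComponentIn E u ∈ intervalComponents E ∧ Icc u v ⊆ connectedComponentIn E u := by
  have hsub : Icc u v ⊆ connectedComponentIn E u :=
    isPreconnected_Icc.subset_connectedComponentIn ⟨le_rfl, huv.le⟩ hE
  refine ⟨⟨⟨u, hE ⟨le_rfl, huv.le⟩, rfl⟩, fun hs => ?_⟩, hsub⟩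
  exact huv.ne (hs (hsub ⟨le_rfl, huv.le⟩) (hsub ⟨huv.le, le_rfl⟩))

/-- A gap of a closed set is a nonempty open interval with endpoints in the set. -/
lemma gap_endpoints {E : Set ℝ} (hE : IsClosed E) {G : Set ℝ} (hG : G ∈ gaps E) :
    sInf G < sSup G ∧ sInf G ∈ E ∧ sSup G ∈ E ∧ (∀ x ∈ E, sInf G < x → sSup G ≤ x) ∧
      ∀ x ∈ G, sInf G ≤ x ∧ x ≤ sSup G := by
  obtain ⟨⟨x, hx, hGx⟩, hbd⟩ := hG
  have hopen : IsOpen G := hGx ▸ hE.isOpen_compl.connectedComponentIn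
  have hpre : IsPreconnected G := hGx ▸ isPreconnected_connectedComponentIn
  have hxG : x ∈ G := hGx ▸ mem_connectedComponentIn hx
  have hsub : G ⊆ Eᶜ := hGx ▸ connectedComponentIn_subset _ _
  have hbb := hbd.bddBelow
  have hba := hbd.bddAbove
  -- Adding to a component a point of its closure keeps it connected, so the point is not new.
  have hclos : ∀ p ∈ closure G, p ∉ E → p ∈ G := by
    intro p hp hpE
    have hc : IsPreconnected (insert p G) :=
      hpre.subset_closure (subset_insert _ _) (insert_subset hp subset_closure)
    have := hc.subset_connectedComponentIn (F := Eᶜ) (mem_insert_of_mem p hxG)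
      (insert_subset hpE hsub)
    rw [← hGx] at this
    exact this (mem_insert _ _)
  have hinf : sInf G ∉ G := fun hm => by
    obtain ⟨l, hl, hl'⟩ := (mem_nhdsLE_iff_exists_Ioc_subset).1
      (mem_nhdsWithin_of_mem_nhds (t := Iic (sInf G)) (hopen.mem_nhds hm))
    obtain ⟨y, hy1, hy2⟩ := exists_between (mem_Iio.1 hl)
    exact absurd (csInf_le hbb (hl' ⟨hy1, hy2.le⟩)) (not_le.2 hy2)
  have hsup : sSup G ∉ G := fun hm => by
    obtain ⟨l, hl, hl'⟩ := (mem_nhdsGE_iff_exists_Ico_subset).1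
      (mem_nhdsWithin_of_mem_nhds (t := Ici (sSup G)) (hopen.mem_nhds hm))
    obtain ⟨y, hy1, hy2⟩ := exists_between (mem_Ioi.1 hl)
    exact absurd (le_csSup hba (hl' ⟨hy1.le, hy2⟩)) (not_le.2 hy1)
  have hlt1 : sInf G < x := lt_of_le_of_ne (csInf_le hbb hxG) fun h => hinf (h ▸ hxG)
  have hlt2 : x < sSup G := lt_of_le_of_ne (le_csSup hba hxG) fun h => hsup (h ▸ hxG)
  refine ⟨hlt1.trans hlt2, ?_, ?_, ?_, fun y hy => ⟨csInf_le hbb hy, le_csSup hba hy⟩⟩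
  · by_contra hcon
    exact hinf (hclos _ (csInf_mem_closure ⟨x, hxG⟩ hbb) hcon)
  · by_contra hcon
    exact hsup (hclos _ (csSup_mem_closure ⟨x, hxG⟩ hba) hcon)
  · intro y hy hlt
    by_contra! hcon
    exact hsub ((IsConnected.Ioo_csInf_csSup_subset ⟨⟨x, hxG⟩, hpre⟩ hbb hba) ⟨hlt, hcon⟩) hy

theorem IsDigitSet.isCantorval {E : Set ℝ} (h : IsDigitSet E) : IsCantorval E := by
  have hIcc : Icc (2 / 3 : ℝ) (3 / 4) ⊆ E := fun x hx =>
    h.Ico_subset ⟨hx.1, hx.2.trans_lt (by norm_num)⟩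
  refine ⟨⟨0, h.zero_mem⟩, h.compact, ?_, ?_, ?_⟩
  · exact ⟨_, component_mem_gaps h.zero_mem (hIcc ⟨le_rfl, by norm_num⟩) h.not_mem
      (by norm_num) (by norm_num)⟩
  · exact ⟨_, (component_mem_intervalComponents (by norm_num) hIcc).1⟩
  · intro G hG p hp
    obtain ⟨hlt, hinf, hsup, hgap, hGle⟩ := gap_endpoints h.compact.isClosed hG
    simp only [mem_insert_iff, mem_singleton_iff] at hp
    rcases hp with rfl | rfl
    · have key := fun {ε : ℝ} (hε : 0 < ε) => h.left_of_gap hlt hinf (fun x hx hxb => by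
        by_contra! hcon
        exact absurd (hgap x hx hcon) (not_le.2 hxb)) hε
      constructor <;> intro ε hε <;> obtain ⟨q, u, v, h1, h2, h3, h4, h5, h6⟩ := key hε
      · refine ⟨_, component_mem_gaps (h6 ⟨h3.le, le_rfl⟩) hinf h5 h2 h1, ?_, q,
          mem_connectedComponentIn h5, ?_⟩
        · intro he
          have hq : q ∈ G := he ▸ mem_connectedComponentIn h5
          exact absurd (hGle q hq).1 (not_le.2 h1)
        · rw [Metric.mem_ball, Real.dist_eq, abs_lt]
          constructor <;> linarith
      · obtain ⟨hI, hIs⟩ := component_mem_intervalComponents h3 h6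
        refine ⟨_, hI, u, hIs ⟨le_rfl, h3.le⟩, ?_, ?_⟩
        · rw [Metric.mem_ball, Real.dist_eq, abs_lt]
          constructor <;> linarith
        · exact (by linarith : u < sInf G).ne
    · have key := fun {ε : ℝ} (hε : 0 < ε) => h.right_of_gap hlt hsup hgap hε
      constructor <;> intro ε hε <;> obtain ⟨q, u, v, h1, h2, h3, h4, h5, h6⟩ := key hε
      · refine ⟨_, component_mem_gaps hsup (h6 ⟨le_rfl, h3.le⟩) h5 h1 h2, ?_, q,
          mem_connectedComponentIn h5, ?_⟩
        · intro he
          have hq : q ∈ G := he ▸ mem_connectedComponentIn h5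
          exact absurd (hGle q hq).2 (not_le.2 h1)
        · rw [Metric.mem_ball, Real.dist_eq, abs_lt]
          constructor <;> linarith
      · obtain ⟨hI, hIs⟩ := component_mem_intervalComponents h3 h6
        refine ⟨_, hI, u, hIs ⟨le_rfl, h3.le⟩, ?_, ?_⟩
        · rw [Metric.mem_ball, Real.dist_eq, abs_lt]
          constructor <;> linarith
        · exact (by linarith : sSup G < u).ne'

/-! ### The series of Guthrie and Nymann -/

/-- The subsum of `∑ a n` selected by a sequence of bits. -/
noncomputable def bitSum (a : ℕ → ℝ) (s : ℕ → Bool) : ℝ :=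
  ∑' n, if s n then a n else 0

lemma achievementSet_eq_range_s8 {c : ℕ → ℝ} (hs : Summable fun n => |c (n + 1)|) :
    achievementSet c = range (bitSum fun n => c (n + 1)) := by
  have hbit : ∀ s : ℕ → Bool, Summable fun n => if s n then c (n + 1) else 0 := fun s =>
    Summable.of_norm_bounded hs fun n => by
      split_ifs <;> simp
  -- For `A ⊆ {n | 1 ≤ n}` the index `0` contributes nothing, so the sum can be shifted by one.
  have hshift : ∀ (A : Set ℕ), A ⊆ {n | 1 ≤ n} → ∀ y : ℝ,
      HasSum (fun n : A => c (n : ℕ)) y ↔ HasSum (fun n => A.indicator c (n + 1)) y := by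
    intro A hA y
    have h0 : A.indicator c 0 = 0 := indicator_of_notMem (fun h => by simpa using hA h) _
    have h1 := hasSum_subtype_iff_indicator (f := c) (s := A) (a := y)
    have h2 := hasSum_nat_add_iff (f := A.indicator c) (g := y) 1
    simp only [Finset.sum_range_one, h0, add_zero] at h2
    rw [h2, ← h1]
    rfl
  ext y
  constructor
  · rintro ⟨A, hA, hy⟩
    classical
    refine ⟨fun n => decide (n + 1 ∈ A), ?_⟩
    rw [← ((hshift A hA y).1 hy).tsum_eq]
    simp [bitSum, indicator_apply]
  · rintro ⟨s, rfl⟩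
    have hA : {n | 1 ≤ n ∧ s (n - 1) = true} ⊆ {n : ℕ | 1 ≤ n} := fun n hn => hn.1
    refine ⟨_, hA, (hshift _ hA _).2 ?_⟩
    have heq : (fun n => {n | 1 ≤ n ∧ s (n - 1) = true}.indicator c (n + 1)) =
        fun n => if s n then c (n + 1) else 0 := by
      ext n
      simp [indicator_apply]
    rw [heq]
    exact (hbit s).hasSum

theorem isDigitSet_range_bitSum {a : ℕ → ℝ} (ha0 : a 0 = 3 / 4) (ha1 : a 1 = 1 / 2)
    (ha : ∀ n, a (n + 2) = a n / 4) (hpos : ∀ n, 0 ≤ a n) (hsum : HasSum a (5 / 3)) :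
    IsDigitSet (range (bitSum a)) := by
  have hbit : ∀ s : ℕ → Bool, Summable fun n => if s n then a n else 0 := fun s =>
    Summable.of_nonneg_of_le (fun n => by split_ifs <;> simp [hpos])
      (fun n => by split_ifs <;> simp [hpos]) hsum.summable
  have hnn : ∀ x ∈ range (bitSum a), 0 ≤ x := by
    rintro _ ⟨s, rfl⟩
    exact tsum_nonneg fun n => by split_ifs <;> simp [hpos]
  have hsymm : ∀ x ∈ range (bitSum a), 5 / 3 - x ∈ range (bitSum a) := by
    rintro _ ⟨s, rfl⟩
    refine ⟨fun n => !s n, ?_⟩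
    have h1 := hsum.sub (hbit s).hasSum
    refine Eq.trans ?_ h1.tsum_eq
    refine tsum_congr fun n => ?_
    cases h : s n <;> simp [h]
  have hrec : ∀ s : ℕ → Bool, bitSum a s =
      ((if s 0 then 3 else 0) + (if s 1 then 2 else 0) + bitSum a fun n => s (n + 2)) / 4 := by
    intro s
    have h1 := (hbit s).sum_add_tsum_nat_add 2
    have h2 : (∑' n, if s (n + 2) then a (n + 2) else 0) =
        (bitSum a fun n => s (n + 2)) / 4 := by
      rw [bitSum, ← tsum_div_const]
      refine tsum_congr fun n => ?_
      rw [ha]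
      split_ifs <;> simp
    rw [h2, Finset.sum_range_succ, Finset.sum_range_one, ha0, ha1] at h1
    rw [bitSum, ← h1]
    split_ifs <;> ring
  refine ⟨?_, ⟨fun _ => false, by simp [bitSum]⟩, hnn, ?_, hsymm, ?_⟩
  · apply isCompact_range
    refine continuous_tsum (u := a) (fun n => ?_) hsum.summable fun n s => ?_
    · exact (continuous_of_discreteTopology (f := fun t : Bool => if t then a n else 0)).comp
        (continuous_apply n)
    · split_ifs <;> simp [hpos, abs_of_nonneg]
  · intro x hx
    linarith [hnn _ (hsymm x hx)]
  · intro x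
    constructor
    · rintro ⟨s, rfl⟩
      refine ⟨(if s 0 then 3 else 0) + (if s 1 then 2 else 0), ?_, fun n => s (n + 2), ?_⟩
      · split_ifs <;> simp
      · rw [hrec s]
        push_cast
        ring
    · rintro ⟨d, hd, s, hs⟩
      -- Prepend two bits `u`, `v` to `s`.
      have key : ∀ u v : Bool, (d : ℝ) = (if u then 3 else 0) + (if v then 2 else 0) →
          x ∈ range (bitSum a) := by
        intro u v huv
        refine ⟨fun n => Nat.casesOn n u fun n => Nat.casesOn n v s, ?_⟩
        rw [hrec]
        have hs' : bitSum a s = 4 * x - d := hs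
        simp only [hs', huv]
        change ((if u = true then (3 : ℝ) else 0) + (if v = true then 2 else 0) + _) / 4 = x
        ring
      simp only [mem_insert_iff, mem_singleton_iff] at hd
      rcases hd with rfl | rfl | rfl | rfl
      · exact key false false (by simp)
      · exact key false true (by simp)
      · exact key true false (by simp)
      · exact key true true (by norm_num)

/-- (Guthrie–Nymann) For the sequence `c` with `c (2n-1) = 3/4^n` and `c (2n) = 2/4^n`
(for `n ≥ 1`), the series converges, the set of Kakeya conditions is the set of even
indices, and the achievement set is a Cantorval. -/
theorem guthrie_nymann_cantorval (c : ℕ → ℝ)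
    (hc : ∀ n : ℕ, 1 ≤ n → c (2 * n - 1) = 3 / 4 ^ n ∧ c (2 * n) = 2 / 4 ^ n) :
    Summable (fun n : ℕ => c (n + 1)) ∧
    kakeyaSet c = {n : ℕ | 1 ≤ n ∧ Even n} ∧
    IsCantorval (achievementSet c) := by
  obtain ⟨a, ha_def⟩ : ∃ a : ℕ → ℝ, a = fun n => c (n + 1) := ⟨_, rfl⟩
  have hodd : ∀ k, a (2 * k) = 3 / 4 / 4 ^ k := fun k => by
    rw [ha_def]
    have := (hc (k + 1) (by omega)).1
    rw [show 2 * (k + 1) - 1 = 2 * k + 1 by omega] at this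
    simp only [this, pow_succ]
    field_simp
  have heven : ∀ k, a (2 * k + 1) = 1 / 2 / 4 ^ k := fun k => by
    rw [ha_def]
    have := (hc (k + 1) (by omega)).2
    rw [show 2 * (k + 1) = 2 * k + 1 + 1 by omega] at this
    simp only [this, pow_succ]
    field_simp
    norm_num
  have ha : ∀ n, a (n + 2) = a n / 4 := by
    intro n
    obtain ⟨k, rfl | rfl⟩ := n.even_or_odd'
    · rw [show 2 * k + 2 = 2 * (k + 1) by ring, hodd, hodd, pow_succ]
      field_simp
    · rw [show 2 * k + 1 + 2 = 2 * (k + 1) + 1 by ring, heven, heven, pow_succ]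
      field_simp
  have hpos : ∀ n, 0 ≤ a n := by
    intro n
    obtain ⟨k, rfl | rfl⟩ := n.even_or_odd'
    · rw [hodd]; positivity
    · rw [heven]; positivity
  have hle : ∀ n, a n ≤ (1 / 2) ^ n := by
    intro n
    obtain ⟨k, rfl | rfl⟩ := n.even_or_odd'
    · rw [hodd, pow_mul, show ((1 / 2 : ℝ) ^ 2) = 4⁻¹ by norm_num, inv_pow, div_eq_mul_inv]
      have : (0 : ℝ) < (4 ^ k)⁻¹ := by positivity
      linarith
    · rw [heven, pow_succ, pow_mul, show ((1 / 2 : ℝ) ^ 2) = 4⁻¹ by norm_num, inv_pow,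
        div_eq_mul_inv]
      linarith
  have hsum : Summable a :=
    Summable.of_nonneg_of_le hpos hle (summable_geometric_of_lt_one (by norm_num) (by norm_num))
  have hrem : ∀ n, remainder c n = ∑' i, a (i + n) := by
    intro n
    rw [remainder]
    let e : ℕ ≃ {i : ℕ // n < i} :=
      { toFun := fun i => ⟨i + n + 1, by omega⟩
        invFun := fun i => i.1 - n - 1
        left_inv := fun i => by simp only; omega
        right_inv := fun i => by
          obtain ⟨i, hi⟩ := i
          simp only [Subtype.mk.injEq]
          omega }
    rw [← e.tsum_eq]
    simp [e, ha_def]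
  have hR2 : ∀ n, remainder c (n + 2) = remainder c n / 4 := by
    intro n
    rw [hrem, hrem, ← tsum_div_const]
    exact tsum_congr fun i => ha (i + n)
  have hR0 : remainder c 0 = 5 / 3 := by
    have h1 := hsum.sum_add_tsum_nat_add 2
    have h2 := hR2 0
    rw [hrem, hrem] at h2
    have h3 := hodd 0
    have h4 := heven 0
    norm_num at h1 h2 h3 h4
    rw [Finset.sum_range_succ, Finset.sum_range_one, h3, h4] at h1
    rw [hrem]
    norm_num
    linarith
  have hR1 : remainder c 1 = 11 / 12 := by
    have h1 := hsum.sum_add_tsum_nat_add 1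
    rw [hrem] at hR0 ⊢
    have h3 := hodd 0
    norm_num at h1 h3 hR0
    linarith
  have hReven : ∀ k, remainder c (2 * k) = 5 / 3 / 4 ^ k := by
    intro k
    induction k with
    | zero => simpa using hR0
    | succ k ih =>
      rw [show 2 * (k + 1) = 2 * k + 2 by ring, hR2, ih, pow_succ]
      field_simp
  have hRodd : ∀ k, remainder c (2 * k + 1) = 11 / 12 / 4 ^ k := by
    intro k
    induction k with
    | zero => simpa using hR1
    | succ k ih =>
      rw [show 2 * (k + 1) + 1 = 2 * k + 1 + 2 by ring, hR2, ih, pow_succ]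
      field_simp
  have htot : HasSum a (5 / 3) := by
    have := hsum.hasSum
    rw [hrem] at hR0
    simpa [← hR0] using this
  refine ⟨ha_def ▸ hsum, ?_, ?_⟩
  · ext n
    simp only [kakeyaSet, mem_ofPred_eq, and_congr_right_iff]
    intro hn
    obtain ⟨k, rfl | rfl⟩ := n.even_or_odd'
    · rw [hReven, (hc k (by omega)).2]
      exact iff_of_true (div_lt_div_of_pos_right (by norm_num) (by positivity)) (even_two_mul k)
    · have hk := hodd k
      rw [ha_def] at hk
      simp only at hk
      rw [hRodd, hk]
      exact iff_of_false
        (not_lt.2 (div_le_div_of_nonneg_right (by norm_num) (by positivity))) (by simp)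
  · have habs : Summable fun n => |c (n + 1)| := by
      have : Summable fun n => |a n| := hsum.abs
      rwa [ha_def] at this
    rw [achievementSet_eq_range_s8 habs, ← ha_def]
    refine (isDigitSet_range_bitSum ?_ ?_ ha hpos htot).isCantorval
    · simpa using hodd 0
    · simpa using heven 0
end
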